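/- Let Δ be a simplicial complex on [n]. If Δ has a shedding vertex v such that both link_Δ(v) and del_Δ(v) are sequentially Cohen-Macaulay, then Δ is sequentially Cohen-Macaulay. -/

import Mathlib

open MvPolynomial

namespace Paper

/-- An (abstract) simplicial complex: a nonempty, downward closed collection of
finite subsets of the vertex set. -/
def IsComplex {n : ℕ} (Δ : Set (Finset (Fin n))) : Prop :=
  Δ.Nonempty ∧ ∀ F ∈ Δ, ∀ G, G ⊆ F → G ∈ Δ

/-- The deletion `del_Δ(v)`. -/
def delC {n : ℕ} (Δ : Set (Finset (Fin n))) (v : Fin n) : Set (Finset (Fin n)) :=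
  {G ∈ Δ | v ∉ G}

/-- The link `link_Δ(v)`. -/
def linkC {n : ℕ} (Δ : Set (Finset (Fin n))) (v : Fin n) : Set (Finset (Fin n)) :=
  {G | G ∈ Δ ∧ v ∉ G ∧ insert v G ∈ Δ}

/-- A facet is a maximal face. -/
def IsFacet {n : ℕ} (Δ : Set (Finset (Fin n))) (F : Finset (Fin n)) : Prop :=
  F ∈ Δ ∧ ∀ G ∈ Δ, F ⊆ G → G = F

/-- A vertex `v` of `Δ` is a shedding vertex if every facet of `del_Δ(v)` is a facet
of `Δ`. -/
def IsSheddingVertex {n : ℕ} (Δ : Set (Finset (Fin n))) (v : Fin n) : Prop :=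
  {v} ∈ Δ ∧ ∀ F, IsFacet (delC Δ v) F → IsFacet Δ F

/-- `Δ` is a simplex: it has a unique maximal face containing all faces. -/
def IsSimplexC {n : ℕ} (Δ : Set (Finset (Fin n))) : Prop :=
  ∃ F ∈ Δ, ∀ G ∈ Δ, G ⊆ F

/-- Vertex decomposability, defined recursively. -/
inductive IsVertexDecomposable {n : ℕ} : Set (Finset (Fin n)) → Prop
  | simplex {Δ : Set (Finset (Fin n))} (h : IsComplex Δ) (hs : IsSimplexC Δ) :
      IsVertexDecomposable Δ
  | step {Δ : Set (Finset (Fin n))} (h : IsComplex Δ) (v : Fin n)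
      (hv : IsSheddingVertex Δ v)
      (h1 : IsVertexDecomposable (linkC Δ v)) (h2 : IsVertexDecomposable (delC Δ v)) :
      IsVertexDecomposable Δ

/-- The Stanley-Reisner ideal of `Δ`, generated by the squarefree monomials
`x_F = ∏_{i ∈ F} x_i` with `F ∉ Δ`. -/
noncomputable def SRIdeal (n : ℕ) (K : Type) [Field K] (Δ : Set (Finset (Fin n))) :
    Ideal (MvPolynomial (Fin n) K) :=
  Ideal.span {m | ∃ F : Finset (Fin n), F ∉ Δ ∧ m = ∏ i ∈ F, X i}

/-- `P_{F̄}`, the prime ideal generated by the variables `x_i` with `i ∉ F`. -/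
noncomputable def facePrime (n : ℕ) (K : Type) [Field K] (F : Finset (Fin n)) :
    Ideal (MvPolynomial (Fin n) K) :=
  Ideal.span ((fun i => (X i : MvPolynomial (Fin n) K)) '' {i | i ∉ F})

/-- The depth of a module `M` with respect to an ideal `J`: the supremum of lengths of
`M`-regular sequences consisting of elements of `J`. -/
noncomputable def depth {A : Type} [CommRing A] (J : Ideal A)
    (M : Type) [AddCommGroup M] [Module A M] : ℕ∞ :=
  sSup {k : ℕ∞ | ∃ rs : List A, (rs.length : ℕ∞) = k ∧ (∀ r ∈ rs, r ∈ J) ∧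
    RingTheory.Sequence.IsRegular M rs}

/-- The irrelevant maximal ideal `𝔪 = (x_1, …, x_n)` of `K[x_1, …, x_n]`. -/
noncomputable def mIdeal (n : ℕ) (K : Type) [Field K] : Ideal (MvPolynomial (Fin n) K) :=
  Ideal.span (Set.range X)

/-- The Krull dimension of a module, `dim M = dim (A / ann M)`. -/
noncomputable def mdim (A : Type) [CommRing A] (M : Type) [AddCommGroup M] [Module A M] :
    WithBot ℕ∞ :=
  ringKrullDim (A ⧸ Module.annihilator A M)

/-- A module over `K[x_1, …, x_n]` is Cohen-Macaulay if its depth with respect to the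
irrelevant maximal ideal equals its Krull dimension. -/
def IsCMMod (n : ℕ) (K : Type) [Field K] (M : Type) [AddCommGroup M]
    [Module (MvPolynomial (Fin n) K) M] : Prop :=
  (depth (mIdeal n K) M : WithBot ℕ∞) = mdim (MvPolynomial (Fin n) K) M

/-- A module over `K[x_1, …, x_n]` is sequentially Cohen-Macaulay if it admits a finite
filtration `0 = M_0 ⊂ M_1 ⊂ ⋯ ⊂ M_r = M` with Cohen-Macaulay quotients of strictly
increasing dimensions. -/
def IsSeqCMMod (n : ℕ) (K : Type) [Field K] (M : Type) [AddCommGroup M]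
    [Module (MvPolynomial (Fin n) K) M] : Prop :=
  ∃ (r : ℕ) (f : Fin (r + 1) → Submodule (MvPolynomial (Fin n) K) M),
    f 0 = ⊥ ∧ f (Fin.last r) = ⊤ ∧ StrictMono f ∧
    (∀ i : Fin r,
      IsCMMod n K (↥(f i.succ) ⧸ Submodule.comap (f i.succ).subtype (f i.castSucc))) ∧
    ∀ i j : Fin r, i < j →
      mdim (MvPolynomial (Fin n) K)
          (↥(f i.succ) ⧸ Submodule.comap (f i.succ).subtype (f i.castSucc)) <
        mdim (MvPolynomial (Fin n) K)
          (↥(f j.succ) ⧸ Submodule.comap (f j.succ).subtype (f j.castSucc))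

/-- Height of an ideal (meaningful for prime ideals). -/
noncomputable def htP {A : Type} [CommRing A] (𝔭 : Ideal A) : ℕ∞ :=
  ⨆ (h : 𝔭.IsPrime), Order.height (⟨𝔭, h⟩ : PrimeSpectrum A)

/-- The big height of `I`: the maximum of the heights of the associated primes of `I`. -/
noncomputable def bigh {A : Type} [CommRing A] (I : Ideal A) : ℕ∞ :=
  ⨆ 𝔭 ∈ associatedPrimes A (A ⧸ I), htP 𝔭

section ExtPart
open CategoryTheory CategoryTheory.Abelian Pointwise

/-- Homological depth: `Ext^i(A/J, M) = 0` for all `i < k`. -/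
def DGE {A : Type} [CommRing A] (J : Ideal A) (k : ℕ) (M : Type) [AddCommGroup M] [Module A M] :
    Prop :=
  ∀ i < k, ∀ x : Ext (ModuleCat.of A (A ⧸ J)) (ModuleCat.of A M) i, x = 0

variable {A : Type} [CommRing A] {J : Ideal A}
  {M₁ M₂ M₃ : Type} [AddCommGroup M₁] [Module A M₁] [AddCommGroup M₂] [Module A M₂]
  [AddCommGroup M₃] [Module A M₃]

lemma DGE.mono {k l : ℕ} (h : DGE J k M₁) (hl : l ≤ k) : DGE J l M₁ :=
  fun i hi x => h i (by omega) x

lemma exists_ses (f : M₁ →ₗ[A] M₂) (g : M₂ →ₗ[A] M₃) (hf : Function.Injective f)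
    (hfg : Function.Exact f g) (hg : Function.Surjective g) :
    (ModuleCat.shortComplexOfCompEqZero f g hfg.linearMap_comp_eq_zero).ShortExact where
  exact := ModuleCat.shortComplex_exact _ hfg
  mono_f := by simpa [ModuleCat.mono_iff_injective] using! hf
  epi_g := by simpa [ModuleCat.epi_iff_surjective] using! hg

lemma DGE.mid {k : ℕ} (f : M₁ →ₗ[A] M₂) (g : M₂ →ₗ[A] M₃) (hf : Function.Injective f)
    (hfg : Function.Exact f g) (hg : Function.Surjective g)
    (h1 : DGE J k M₁) (h3 : DGE J k M₃) : DGE J k M₂ := by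
  intro i hi x
  obtain ⟨y, hy⟩ := Ext.covariant_sequence_exact₂ (ModuleCat.of A (A ⧸ J))
    (exists_ses f g hf hfg hg) x (h3 i hi _)
  rw [← hy, h1 i hi y, Ext.zero_comp]

lemma DGE.left {k : ℕ} (f : M₁ →ₗ[A] M₂) (g : M₂ →ₗ[A] M₃) (hf : Function.Injective f)
    (hfg : Function.Exact f g) (hg : Function.Surjective g)
    (h2 : DGE J k M₂) (h3 : DGE J (k - 1) M₃) : DGE J k M₁ := by
  intro i hi x
  match i with
  | 0 =>
    have hm := (exists_ses f g hf hfg hg).mono_f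
    apply Ext.postcomp_mk₀_injective_of_mono _
      (ModuleCat.shortComplexOfCompEqZero f g hfg.linearMap_comp_eq_zero).f
    exact (h2 0 hi _).trans (h2 0 hi _).symm
  | i + 1 =>
    obtain ⟨y, hy⟩ := Ext.covariant_sequence_exact₁ (ModuleCat.of A (A ⧸ J))
      (exists_ses f g hf hfg hg) x (h2 (i + 1) hi _) rfl
    rw [← hy, h3 i (by omega) y, Ext.zero_comp]

lemma DGE.right {k : ℕ} (f : M₁ →ₗ[A] M₂) (g : M₂ →ₗ[A] M₃) (hf : Function.Injective f)
    (hfg : Function.Exact f g) (hg : Function.Surjective g)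
    (h2 : DGE J k M₂) (h1 : DGE J (k + 1) M₁) : DGE J k M₃ := by
  intro i hi x
  obtain ⟨y, hy⟩ := Ext.covariant_sequence_exact₃ (ModuleCat.of A (A ⧸ J))
    (exists_ses f g hf hfg hg) x rfl (h1 (i + 1) (by omega) _)
  rw [← hy, h2 i hi y, Ext.zero_comp]

lemma DGE.of_equiv {k : ℕ} (e : M₁ ≃ₗ[A] M₂) (h : DGE J k M₁) : DGE J k M₂ := by
  intro i hi x
  have h0 := h i hi (x.comp (Ext.mk₀ (ModuleCat.ofHom e.symm.toLinearMap)) (add_zero _))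
  have : (x.comp (Ext.mk₀ (ModuleCat.ofHom e.symm.toLinearMap)) (add_zero _)).comp
      (Ext.mk₀ (ModuleCat.ofHom e.toLinearMap)) (add_zero _) = x := by
    rw [Ext.comp_assoc_of_third_deg_zero, Ext.mk₀_comp_mk₀]
    have : ModuleCat.ofHom e.symm.toLinearMap ≫ ModuleCat.ofHom e.toLinearMap = 𝟙 _ := by
      ext; simp
    rw [this, Ext.comp_mk₀_id]
  rw [← this, h0, Ext.zero_comp]

lemma ext_smul_eq_zero_left {i : ℕ} {a : A} (ha : a ∈ J)
    (x : Ext (ModuleCat.of A (A ⧸ J)) (ModuleCat.of A M₁) i) : a • x = 0 := by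
  have h : a • 𝟙 (ModuleCat.of A (A ⧸ J)) = 0 := by
    ext
    simp [Algebra.smul_def, Ideal.Quotient.eq_zero_iff_mem.mpr ha]
  have : a • x = (Ext.mk₀ (a • 𝟙 (ModuleCat.of A (A ⧸ J)))).comp x (zero_add _) := by
    rw [Ext.mk₀_smul, Ext.smul_comp, Ext.mk₀_id_comp]
  rw [this, h, Ext.mk₀_zero, Ext.zero_comp]

lemma ext_smul_eq_zero_right {i : ℕ} {a : A} (ha : ∀ m : M₁, a • m = 0)
    (x : Ext (ModuleCat.of A (A ⧸ J)) (ModuleCat.of A M₁) i) : a • x = 0 := by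
  have h : a • 𝟙 (ModuleCat.of A M₁) = 0 := by
    ext m
    simpa using ha m
  rw [Ext.smul_eq_comp_mk₀, h, Ext.mk₀_zero, Ext.comp_zero]

/-- modules killed by an element outside the maximal ideal have infinite depth -/
lemma DGE.of_killed [J.IsMaximal] {a : A} (haJ : a ∉ J) (ha : ∀ m : M₁, a • m = 0) (k : ℕ) :
    DGE J k M₁ := by
  intro i _ x
  obtain ⟨b, c, hc, hbc⟩ := Ideal.IsMaximal.exists_inv ‹J.IsMaximal› haJ
  calc x = (1 : A) • x := (one_smul _ _).symm
    _ = b • (a • x) + c • x := by rw [← hbc, add_smul, mul_smul]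
    _ = 0 := by rw [ext_smul_eq_zero_right ha, ext_smul_eq_zero_left hc]; simp

/-- multiplication by a regular element of `J` -/
lemma DGE.of_regular {k : ℕ} {a : A} (ha : a ∈ J) (f : M₁ →ₗ[A] M₁) (hfa : ∀ m, f m = a • m)
    (g : M₁ →ₗ[A] M₃) (hf : Function.Injective f)
    (hfg : Function.Exact f g) (hg : Function.Surjective g) (h3 : DGE J k M₃) :
    DGE J (k + 1) M₁ := by
  have key : ∀ i, ∀ x : Ext (ModuleCat.of A (A ⧸ J)) (ModuleCat.of A M₁) i,
      x.comp (Ext.mk₀ (ModuleCat.ofHom f)) (add_zero _) = 0 := by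
    intro i x
    have : ModuleCat.ofHom f = a • 𝟙 (ModuleCat.of A M₁) := by
      ext m
      simpa using hfa m
    rw [this, ← Ext.smul_eq_comp_mk₀, ext_smul_eq_zero_left ha]
  intro i hi x
  match i with
  | 0 =>
    have hm := (exists_ses f g hf hfg hg).mono_f
    apply Ext.postcomp_mk₀_injective_of_mono _
      (ModuleCat.shortComplexOfCompEqZero f g hfg.linearMap_comp_eq_zero).f
    exact (key 0 _).trans (key 0 _).symm
  | i + 1 =>
    obtain ⟨y, hy⟩ := Ext.covariant_sequence_exact₁ (ModuleCat.of A (A ⧸ J))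
      (exists_ses f g hf hfg hg) x (key (i + 1) _) rfl
    rw [← hy, h3 i (by omega) y, Ext.zero_comp]

lemma DGE.of_quotSMulTop {k : ℕ} {a : A} (ha : a ∈ J) (hr : IsSMulRegular M₁ a)
    (h : DGE J k (QuotSMulTop a M₁)) : DGE J (k + 1) M₁ :=
  DGE.of_regular ha (LinearMap.lsmul A M₁ a) (fun _ => rfl) (a • (⊤ : Submodule A M₁)).mkQ hr
    (LinearMap.exact_lsmul_mkQ_smul_top M₁ a) (Submodule.mkQ_surjective _) h

lemma DGE.quotSMulTop {k : ℕ} {a : A} (hr : IsSMulRegular M₁ a)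
    (h : DGE J (k + 1) M₁) : DGE J k (QuotSMulTop a M₁) :=
  DGE.right (LinearMap.lsmul A M₁ a) (a • (⊤ : Submodule A M₁)).mkQ hr
    (LinearMap.exact_lsmul_mkQ_smul_top M₁ a) (Submodule.mkQ_surjective _) 
    (h.mono (by omega)) h

lemma DGE.of_weaklyRegular (rs : List A) : ∀ (M : Type) [AddCommGroup M] [Module A M],
    (∀ r ∈ rs, r ∈ J) → RingTheory.Sequence.IsWeaklyRegular M rs → DGE J rs.length M := by
  induction rs with
  | nil => intro M _ _ _ _ i hi; simp at hi
  | cons a rs ih =>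
    intro M _ _ hJ hr
    rw [RingTheory.Sequence.isWeaklyRegular_cons_iff] at hr
    exact DGE.of_quotSMulTop (hJ a (by simp)) hr.1
      (ih _ (fun r hr => hJ r (by simp [hr])) hr.2)

lemma DGE.exists_regular [IsNoetherianRing A] [Module.Finite A M₁] {k : ℕ}
    (h : DGE J (k + 1) M₁) : ∃ r ∈ J, IsSMulRegular M₁ r := by
  have : Subsingleton (ModuleCat.of A (A ⧸ J) ⟶ ModuleCat.of A M₁) :=
    Ext.addEquiv₀.subsingleton_congr.mp (subsingleton_of_forall_eq 0 (h 0 (by omega)))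
  have : Subsingleton ((A ⧸ J) →ₗ[A] M₁) :=
    (ModuleCat.homAddEquiv (M := ModuleCat.of A (A ⧸ J)) (N := ModuleCat.of A M₁)).symm.subsingleton
  obtain ⟨x, mem_ann, hx⟩ := IsSMulRegular.subsingleton_linearMap_iff.mp this
  rw [Ideal.annihilator_quotient] at mem_ann
  exact ⟨x, mem_ann, hx⟩

lemma DGE.exists_isRegular [IsNoetherianRing A] [Module.Finite A M₁] {k : ℕ}
    (h : DGE J k M₁) (hJ : J • (⊤ : Submodule A M₁) < ⊤) :
    ∃ rs : List A, rs.length = k ∧ (∀ r ∈ rs, r ∈ J) ∧ RingTheory.Sequence.IsRegular M₁ rs := by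
  apply ModuleCat.exists_isRegular_of_exists_subsingleton_ext J k (ModuleCat.of A M₁) hJ
    (ModuleCat.of A (A ⧸ J))
  · rw [Module.support_eq_zeroLocus, Ideal.annihilator_quotient]
  · exact fun i hi => subsingleton_of_forall_eq 0 (h i hi)

end ExtPart
section DimPart
open Pointwise

variable {A : Type} [CommRing A] {J : Ideal A}

lemma length_le_supportDim (rs : List A) : ∀ (M : Type) [AddCommGroup M] [Module A M]
    [Module.Finite A M], RingTheory.Sequence.IsRegular M rs →
    (rs.length : WithBot ℕ∞) ≤ Module.supportDim A M := by
  induction rs with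
  | nil =>
    intro M _ _ _ hr
    have := hr.nontrivial
    rw [List.length_nil, Nat.cast_zero]
    exact Order.krullDim_nonneg_iff.mpr (Module.nonempty_support_of_nontrivial.to_subtype)
  | cons a rs ih =>
    intro M _ _ _ hr
    rw [RingTheory.Sequence.isRegular_cons_iff] at hr
    have h1 := ih _ hr.2
    have h2 := Module.supportDim_quotSMulTop_succ_le_of_notMem_minimalPrimes (R := A) (M := M)
      (x := a) (fun p hp => hr.1.notMem_of_mem_minimalPrimes hp)
    refine le_trans ?_ h2
    rw [List.length_cons, Nat.cast_add, Nat.cast_one]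
    gcongr

lemma DGE.le_supportDim [IsNoetherianRing A] [hJ : J.IsMaximal] (k : ℕ) : ∀ (U : Type) [AddCommGroup U] [Module A U]
    [Module.Finite A U], DGE J k U → ∀ T : Submodule A U, Module.annihilator A T ≤ J →
    (k : WithBot ℕ∞) ≤ Module.supportDim A T := by
  induction k with
  | zero =>
    intro U _ _ _ _ T hT
    have : Nontrivial T := by
      by_contra h
      rw [not_nontrivial_iff_subsingleton] at h
      rw [Module.annihilator_eq_top_iff.mpr h] at hT
      exact hJ.ne_top (top_le_iff.mp hT)
    rw [Nat.cast_zero]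
    exact Order.krullDim_nonneg_iff.mpr (Module.nonempty_support_of_nontrivial.to_subtype)
  | succ k ih =>
    intro U _ _ _ hU T hT
    obtain ⟨r, hrJ, hr⟩ := hU.exists_regular
    let f : ℕ →o Submodule A U :=
      ⟨fun N => T.comap (LinearMap.lsmul A U (r ^ N)), by
        apply monotone_nat_of_le_succ
        intro N u hu
        simp only [Submodule.mem_comap, LinearMap.lsmul_apply] at hu ⊢
        rw [pow_succ', mul_smul]
        exact T.smul_mem _ hu⟩
    obtain ⟨N, hN⟩ := monotone_stabilizes_iff_noetherian.mpr
      (inferInstance : IsNoetherian A U) f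
    have hN' := hN (N + 1) (by omega)
    set T' := f N with hT'def
    have hsat : ∀ u, r • u ∈ T' → u ∈ T' := by
      intro u hu
      have : u ∈ f (N + 1) := by
        change r ^ (N + 1) • u ∈ T
        rw [pow_succ, mul_smul]
        exact hu
      rwa [← hN'] at this
    have hTT' : T ≤ T' := fun u hu => T.smul_mem _ hu
    -- dimension of T' is at most that of T
    have hdim : Module.supportDim A T' ≤ Module.supportDim A T := by
      let φ : T' →ₗ[A] T := LinearMap.codRestrict T
        ((LinearMap.lsmul A U (r ^ N)).comp T'.subtype) (fun u => u.2)
      refine Module.supportDim_le_of_injective φ ?_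
      intro x y hxy
      have := congrArg Subtype.val hxy
      exact Subtype.ext (hr.pow N this)
    have hregT' : IsSMulRegular T' r := fun x y hxy =>
      Subtype.ext (hr (congrArg Subtype.val hxy))
    have h2 := Module.supportDim_quotSMulTop_succ_le_of_notMem_minimalPrimes (R := A) (M := T')
      (x := r) (fun p hp => hregT'.notMem_of_mem_minimalPrimes hp)
    let T'' : Submodule A (QuotSMulTop r U) := T'.map (r • (⊤ : Submodule A U)).mkQ
    have hsurj : Module.supportDim A T'' ≤ Module.supportDim A (QuotSMulTop r T') := by
      let ψ : T' →ₗ[A] T'' := LinearMap.codRestrict T''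
        (((r • (⊤ : Submodule A U)).mkQ).comp T'.subtype)
        (fun u => Submodule.mem_map_of_mem u.2)
      have hψ : Function.Surjective ψ := by
        rintro ⟨y, u, hu, rfl⟩
        exact ⟨⟨u, hu⟩, rfl⟩
      have hker : r • (⊤ : Submodule A T') ≤ LinearMap.ker ψ := by
        intro x hx
        rw [Submodule.mem_smul_pointwise_iff_exists] at hx
        obtain ⟨y, -, rfl⟩ := hx
        rw [LinearMap.mem_ker]
        apply Subtype.ext
        change (r • (⊤ : Submodule A U)).mkQ (r • (y : U)) = 0
        rw [Submodule.mkQ_apply, Submodule.Quotient.mk_eq_zero]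
        exact Submodule.smul_mem_pointwise_smul _ _ _ trivial
      refine Module.supportDim_le_of_surjective ((r • (⊤ : Submodule A T')).liftQ ψ hker) ?_
      intro y
      obtain ⟨x, rfl⟩ := hψ y
      exact ⟨Submodule.Quotient.mk x, by simp⟩
    have hann : Module.annihilator A T'' ≤ J := by
      intro a ha
      by_contra haJ
      rw [Module.mem_annihilator] at ha
      have h3 : ∀ t ∈ T', a • t ∈ J • T' := by
        intro t ht
        have := congrArg Subtype.val (ha ⟨_, Submodule.mem_map_of_mem ht⟩)
        change a • (r • (⊤ : Submodule A U)).mkQ t = 0 at this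
        rw [← map_smul, Submodule.mkQ_apply, Submodule.Quotient.mk_eq_zero,
          Submodule.mem_smul_pointwise_iff_exists] at this
        obtain ⟨u, -, hu⟩ := this
        rw [← hu]
        exact Submodule.smul_mem_smul hrJ (hsat u (hu ▸ T'.smul_mem a ht))
      obtain ⟨b, c, hc, hbc⟩ := hJ.exists_inv haJ
      have h4 : T' ≤ J • T' := by
        intro t ht
        have : t = b • (a • t) + c • t := by
          rw [← mul_smul, ← add_smul, hbc, one_smul]
        rw [this]
        exact add_mem (Submodule.smul_mem _ _ (h3 t ht)) (Submodule.smul_mem_smul hc ht)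
      obtain ⟨s, hs, hs0⟩ := Submodule.exists_sub_one_mem_and_smul_eq_zero_of_fg_of_le_smul J T'
        (IsNoetherian.noetherian T') h4
      have : s ∈ J := hT (Module.mem_annihilator.mpr fun t =>
        Subtype.ext (hs0 t (hTT' t.2)))
      apply hJ.ne_top
      rw [Ideal.eq_top_iff_one]
      simpa using J.sub_mem this hs
    have h5 := ih _ (hU.quotSMulTop hr) T'' hann
    calc ((k + 1 : ℕ) : WithBot ℕ∞) = k + 1 := by rw [Nat.cast_add, Nat.cast_one]
      _ ≤ Module.supportDim A (QuotSMulTop r T') + 1 := by gcongr; exact h5.trans hsurj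
      _ ≤ _ := h2.trans hdim

end DimPart
section SRPart

variable {n : ℕ} {K : Type} [Field K]

/-- Downward closed families. -/
def DC (Γ : Set (Finset (Fin n))) : Prop := ∀ F ∈ Γ, ∀ G, G ⊆ F → G ∈ Γ

lemma mem_facePrime {F : Finset (Fin n)} {f : MvPolynomial (Fin n) K} :
    f ∈ facePrime n K F ↔ ∀ m ∈ f.support, ¬ m.support ⊆ F := by
  rw [facePrime, mem_ideal_span_X_image]
  refine forall₂_congr fun m _ => ?_
  rw [Finset.not_subset]
  constructor
  · rintro ⟨i, hi, h⟩; exact ⟨i, by simpa using h, hi⟩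
  · rintro ⟨i, h, hi⟩; exact ⟨i, hi, by simpa using h⟩

lemma mem_SR {Γ : Set (Finset (Fin n))} (hΓ : DC Γ) {f : MvPolynomial (Fin n) K} :
    f ∈ SRIdeal n K Γ ↔ ∀ m ∈ f.support, m.support ∉ Γ := by
  have hset : {m | ∃ F : Finset (Fin n), F ∉ Γ ∧ m = ∏ i ∈ F, (X i : MvPolynomial (Fin n) K)} =
      (fun s => monomial s (1 : K)) '' {s | ∃ F, F ∉ Γ ∧ s = ∑ i ∈ F, Finsupp.single i 1} := by
    have hp : ∀ F : Finset (Fin n), ∏ i ∈ F, (X i : MvPolynomial (Fin n) K) =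
        monomial (∑ i ∈ F, Finsupp.single i 1) 1 := by
      intro F
      rw [monomial_sum_one]
      rfl
    ext m
    constructor
    · rintro ⟨F, hF, rfl⟩
      exact ⟨_, ⟨F, hF, rfl⟩, (hp F).symm⟩
    · rintro ⟨s, ⟨F, hF, rfl⟩, rfl⟩
      exact ⟨F, hF, (hp F).symm⟩
  have hval : ∀ (F : Finset (Fin n)) (j : Fin n),
      (∑ i ∈ F, Finsupp.single i 1 : Fin n →₀ ℕ) j = if j ∈ F then 1 else 0 := by
    intro F j
    simp [Finsupp.finsetSum_apply, Finsupp.single_apply]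
  rw [SRIdeal, hset, mem_ideal_span_monomial_image]
  refine forall₂_congr fun m _ => ?_
  constructor
  · rintro ⟨s, ⟨F, hF, rfl⟩, hs⟩ hm
    refine hF (hΓ _ hm F fun j hj => ?_)
    have := hs j
    rw [hval, if_pos hj] at this
    rw [Finsupp.mem_support_iff]
    omega
  · intro hm
    refine ⟨_, ⟨_, hm, rfl⟩, fun j => ?_⟩
    rw [hval]
    split_ifs with h
    · rw [Finsupp.mem_support_iff] at h; omega
    · omega

lemma SR_anti {Γ Γ' : Set (Finset (Fin n))} (h : Γ ⊆ Γ') :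
    SRIdeal n K Γ' ≤ SRIdeal n K Γ :=
  Ideal.span_mono fun _ ⟨F, hF, hm⟩ => ⟨F, fun h' => hF (h h'), hm⟩

lemma mem_SR_iff_facePrime {Γ : Set (Finset (Fin n))} (hΓ : DC Γ) {f : MvPolynomial (Fin n) K} :
    f ∈ SRIdeal n K Γ ↔ ∀ F ∈ Γ, f ∈ facePrime n K F := by
  rw [mem_SR hΓ]
  constructor
  · intro h F hF
    rw [mem_facePrime]
    exact fun m hm hs => h m hm (hΓ F hF _ hs)
  · intro h m hm hmΓ
    exact mem_facePrime.mp (h _ hmΓ) m hm subset_rfl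

/-- Restriction to the coordinate subspace of `F`. -/
noncomputable def resF (n : ℕ) (K : Type) [Field K] (F : Finset (Fin n)) :
    MvPolynomial (Fin n) K →ₐ[K] MvPolynomial F K :=
  aeval (fun i => if h : i ∈ F then X ⟨i, h⟩ else 0)

lemma resF_surj (F : Finset (Fin n)) : Function.Surjective (resF n K F) := by
  intro p
  refine ⟨rename (fun i : F => (i : Fin n)) p, ?_⟩
  have : (resF n K F).comp (rename (fun i : F => (i : Fin n))) = AlgHom.id K _ := by
    apply MvPolynomial.algHom_ext
    intro i
    simp [resF]
  exact DFunLike.congr_fun this p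

lemma ker_resF (F : Finset (Fin n)) : RingHom.ker (resF n K F) = facePrime n K F := by
  apply le_antisymm
  · intro f hf
    rw [RingHom.mem_ker] at hf
    have : ((Ideal.Quotient.mkₐ K (facePrime n K F)).comp
        (rename (fun i : F => (i : Fin n)))).comp (resF n K F) =
        Ideal.Quotient.mkₐ K (facePrime n K F) := by
      apply MvPolynomial.algHom_ext
      intro i
      by_cases h : i ∈ F
      · simp [resF, h]
      · simp only [AlgHom.comp_apply, resF, aeval_X, dif_neg h, map_zero]
        symm
        rw [Ideal.Quotient.mkₐ_eq_mk, Ideal.Quotient.eq_zero_iff_mem]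
        exact Ideal.subset_span ⟨i, h, rfl⟩
    have h2 := DFunLike.congr_fun this f
    rw [AlgHom.comp_apply, hf, map_zero] at h2
    exact Ideal.Quotient.eq_zero_iff_mem.mp h2.symm
  · rw [facePrime, Ideal.span_le]
    rintro _ ⟨i, hi, rfl⟩
    have hi' : i ∉ F := hi
    simp [RingHom.mem_ker, resF, hi']

lemma facePrime_isPrime (F : Finset (Fin n)) : (facePrime n K F).IsPrime := by
  rw [← ker_resF]
  exact RingHom.ker_isPrime _

lemma dim_facePrime (F : Finset (Fin n)) :
    ringKrullDim (MvPolynomial (Fin n) K ⧸ facePrime n K F) = (F.card : WithBot ℕ∞) := by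
  rw [← ker_resF, ringKrullDim_eq_of_ringEquiv
    (Ideal.quotientKerAlgEquivOfSurjective (resF_surj (K := K) F)).toRingEquiv,
    MvPolynomial.ringKrullDim_of_isNoetherianRing, ringKrullDim_eq_zero_of_field]
  simp

lemma dim_SR_le {Γ : Set (Finset (Fin n))} {d : ℕ} (hd : ∀ F ∈ Γ, F.card ≤ d) :
    ringKrullDim (MvPolynomial (Fin n) K ⧸ SRIdeal n K Γ) ≤ (d : WithBot ℕ∞) := by
  classical
  rw [ringKrullDim_quotient]
  refine iSup_le fun p => ?_
  -- the face attached to the smallest prime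
  let q := p.head.1
  let F : Finset (Fin n) := Finset.univ.filter fun i => X i ∉ q.asIdeal
  have hF : F ∈ Γ := by
    by_contra hF
    have h1 : ∏ i ∈ F, (X i : MvPolynomial (Fin n) K) ∈ q.asIdeal :=
      p.head.2 (Ideal.subset_span ⟨F, hF, rfl⟩)
    rw [q.isPrime.prod_mem_iff] at h1
    obtain ⟨i, hi, h⟩ := h1
    exact (Finset.mem_filter.mp hi).2 h
  have hFq : facePrime n K F ≤ q.asIdeal := by
    rw [facePrime, Ideal.span_le]
    rintro _ ⟨i, hi, rfl⟩
    by_contra h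
    exact hi (Finset.mem_filter.mpr ⟨Finset.mem_univ _, h⟩)
  have h2 : (p.length : WithBot ℕ∞) ≤
      ringKrullDim (MvPolynomial (Fin n) K ⧸ facePrime n K F) := by
    rw [ringKrullDim_quotient]
    let p' : LTSeries (PrimeSpectrum.zeroLocus (facePrime n K F : Set (MvPolynomial (Fin n) K))) :=
      { length := p.length
        toFun := fun i => ⟨(p i).1, fun x hx =>
          (show q ≤ (p i).1 from p.head_le i) (hFq hx)⟩
        step := fun i => p.step i }
    exact Order.LTSeries.length_le_krullDim p'
  rw [dim_facePrime] at h2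
  exact h2.trans (by exact_mod_cast hd F hF)

lemma mem_mIdeal {f : MvPolynomial (Fin n) K} : f ∈ mIdeal n K ↔ constantCoeff f = 0 := by
  have : mIdeal n K = facePrime n K ∅ := by
    rw [mIdeal, facePrime]
    congr 1
    ext; simp
  rw [this, mem_facePrime]
  simp only [Finset.subset_empty, Finsupp.support_eq_empty]
  constructor
  · intro h
    by_contra h0
    exact h 0 (by simpa [constantCoeff_eq] using h0) rfl
  · rintro h m hm rfl
    rw [mem_support_iff] at hm
    exact hm h

instance mIdeal_isMaximal : (mIdeal n K).IsMaximal := by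
  have : mIdeal n K = RingHom.ker (constantCoeff (σ := Fin n) (R := K)) := by
    ext f
    rw [mem_mIdeal, RingHom.mem_ker]
  rw [this]
  exact RingHom.ker_isMaximal_of_surjective _ (fun c => ⟨C c, by simp⟩)

lemma facePrime_le_mIdeal (F : Finset (Fin n)) : facePrime n K F ≤ mIdeal n K := by
  rw [facePrime, mIdeal]
  apply Ideal.span_mono
  rintro _ ⟨i, _, rfl⟩
  exact ⟨i, rfl⟩

lemma SR_of_mul_mem {Γ : Set (Finset (Fin n))} (hΓ : DC Γ) {s f : MvPolynomial (Fin n) K}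
    (hs : s ∉ mIdeal n K) (h : s * f ∈ SRIdeal n K Γ) : f ∈ SRIdeal n K Γ := by
  rw [mem_SR_iff_facePrime hΓ] at h ⊢
  intro F hF
  exact ((facePrime_isPrime F).mem_or_mem (h F hF)).resolve_left
    fun h' => hs (facePrime_le_mIdeal F h')

end SRPart
section CombPart

variable {n : ℕ} {K : Type} [Field K]

/-- Subcomplex generated by the facets of size at least `i`. -/
def upC (Δ : Set (Finset (Fin n))) (i : ℕ) : Set (Finset (Fin n)) :=
  {G | ∃ F, IsFacet Δ F ∧ i ≤ F.card ∧ G ⊆ F}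

/-- Subcomplex generated by the facets of size less than `i`. -/
def loC (Δ : Set (Finset (Fin n))) (i : ℕ) : Set (Finset (Fin n)) :=
  {G | ∃ F, IsFacet Δ F ∧ F.card < i ∧ G ⊆ F}

lemma dc_upC (Δ : Set (Finset (Fin n))) (i : ℕ) : DC (upC Δ i) :=
  fun _ ⟨F, h1, h2, h3⟩ _ hG => ⟨F, h1, h2, hG.trans h3⟩

lemma dc_loC (Δ : Set (Finset (Fin n))) (i : ℕ) : DC (loC Δ i) :=
  fun _ ⟨F, h1, h2, h3⟩ _ hG => ⟨F, h1, h2, hG.trans h3⟩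

lemma exists_facet {Δ : Set (Finset (Fin n))} {G : Finset (Fin n)} (hG : G ∈ Δ) :
    ∃ F, IsFacet Δ F ∧ G ⊆ F := by
  obtain ⟨F, hGF, hF⟩ := (Set.toFinite Δ).exists_le_maximal hG
  exact ⟨F, ⟨hF.1, fun H hH hFH => (hF.eq_of_le hH hFH).symm⟩, hGF⟩

lemma upC_subset {Δ : Set (Finset (Fin n))} (hΔ : DC Δ) (i : ℕ) : upC Δ i ⊆ Δ :=
  fun G ⟨F, h1, _, h3⟩ => hΔ F h1.1 G h3

lemma upC_anti (Δ : Set (Finset (Fin n))) {i j : ℕ} (h : i ≤ j) : upC Δ j ⊆ upC Δ i :=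
  fun _ ⟨F, h1, h2, h3⟩ => ⟨F, h1, h.trans h2, h3⟩

lemma upC_zero {Δ : Set (Finset (Fin n))} (hΔ : DC Δ) : upC Δ 0 = Δ := by
  refine Set.Subset.antisymm (upC_subset hΔ 0) fun G hG => ?_
  obtain ⟨F, h1, h2⟩ := exists_facet hG
  exact ⟨F, h1, Nat.zero_le _, h2⟩

lemma upC_top (Δ : Set (Finset (Fin n))) : upC Δ (n + 1) = ∅ := by
  ext G
  simp only [Set.mem_empty_iff_false, iff_false]
  rintro ⟨F, _, h, _⟩
  have := F.card_le_univ
  simp at this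
  omega

lemma mul_mem_SR {Δ : Set (Finset (Fin n))} (hΔ : DC Δ) {i : ℕ} {a f : MvPolynomial (Fin n) K}
    (ha : a ∈ SRIdeal n K (loC Δ i)) (hf : f ∈ SRIdeal n K (upC Δ i)) :
    a * f ∈ SRIdeal n K Δ := by
  rw [mem_SR hΔ]
  intro m hm hmΔ
  obtain ⟨F, h1, h2⟩ := exists_facet hmΔ
  rcases lt_or_ge F.card i with h | h
  · exact (mem_SR (dc_loC Δ i)).mp (Ideal.mul_mem_right f _ ha) m hm ⟨F, h1, h, h2⟩
  · exact (mem_SR (dc_upC Δ i)).mp (Ideal.mul_mem_left _ a hf) m hm ⟨F, h1, h, h2⟩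

lemma linkC_upC {Δ : Set (Finset (Fin n))} (hΔ : DC Δ) (v : Fin n) (i : ℕ) :
    linkC (upC Δ (i + 1)) v = upC (linkC Δ v) i := by
  ext G
  constructor
  · rintro ⟨-, hvG, F, hF, hc, hGF⟩
    have hvF : v ∈ F := hGF (Finset.mem_insert_self _ _)
    refine ⟨F.erase v, ⟨⟨hΔ F hF.1 _ (Finset.erase_subset _ _), Finset.notMem_erase _ _, ?_⟩, ?_⟩,
      ?_, ?_⟩
    · rw [Finset.insert_erase hvF]; exact hF.1
    · rintro H ⟨-, hvH, hH⟩ hFH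
      have := hF.2 _ hH (by
        rw [← Finset.insert_erase hvF]
        exact Finset.insert_subset_insert _ hFH)
      rw [← this, Finset.erase_insert hvH]
    · rw [Finset.card_erase_of_mem hvF]; omega
    · exact Finset.subset_erase.mpr ⟨(Finset.subset_insert _ _).trans hGF, hvG⟩
  · rintro ⟨F, ⟨⟨hF1, hvF, hF2⟩, hmax⟩, hc, hGF⟩
    have hfac : IsFacet Δ (insert v F) := by
      refine ⟨hF2, fun H hH hFH => ?_⟩
      have hvH : v ∈ H := hFH (Finset.mem_insert_self _ _)
      have := hmax (H.erase v) ⟨hΔ H hH _ (Finset.erase_subset _ _), Finset.notMem_erase _ _, by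
        rwa [Finset.insert_erase hvH]⟩
        (Finset.subset_erase.mpr ⟨(Finset.subset_insert _ _).trans hFH, hvF⟩)
      rw [← this, Finset.insert_erase hvH]
    have hcard : i + 1 ≤ (insert v F).card := by
      rw [Finset.card_insert_of_notMem hvF]; omega
    exact ⟨⟨_, hfac, hcard, hGF.trans (Finset.subset_insert _ _)⟩, fun h => hvF (hGF h),
      ⟨_, hfac, hcard, Finset.insert_subset_insert _ hGF⟩⟩

lemma delC_upC {Δ : Set (Finset (Fin n))} (hΔ : DC Δ) (v : Fin n) (hv : IsSheddingVertex Δ v)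
    (i : ℕ) : delC (upC Δ i) v = upC (delC Δ v) i := by
  ext G
  constructor
  · rintro ⟨⟨F, hF, hc, hGF⟩, hvG⟩
    by_cases hvF : v ∈ F
    · have hFd : F.erase v ∈ delC Δ v :=
        ⟨hΔ F hF.1 _ (Finset.erase_subset _ _), Finset.notMem_erase _ _⟩
      obtain ⟨H, hH, hFH⟩ := exists_facet hFd
      have hH' := hv.2 H hH
      have hne : F.erase v ≠ H := by
        intro h
        have := hH'.2 F hF.1 (h ▸ Finset.erase_subset _ _)
        rw [← h] at this
        rw [this] at hvF
        exact Finset.notMem_erase _ _ hvF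
      have hlt := Finset.card_lt_card (Finset.ssubset_iff_subset_ne.mpr ⟨hFH, hne⟩)
      rw [Finset.card_erase_of_mem hvF] at hlt
      exact ⟨H, hH, by omega, (Finset.subset_erase.mpr ⟨hGF, hvG⟩).trans hFH⟩
    · exact ⟨F, ⟨⟨hF.1, hvF⟩, fun H hH h => hF.2 H hH.1 h⟩, hc, hGF⟩
  · rintro ⟨F, hF, hc, hGF⟩
    exact ⟨⟨F, hv.2 F hF, hc, hGF⟩, fun h => hF.1.2 (hGF h)⟩

lemma dc_linkC {Δ : Set (Finset (Fin n))} (hΔ : DC Δ) (v : Fin n) : DC (linkC Δ v) :=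
  fun _ ⟨h1, h2, h3⟩ G hG => ⟨hΔ _ h1 G hG, fun h => h2 (hG h),
    hΔ _ h3 _ (Finset.insert_subset_insert _ hG)⟩

lemma dc_delC {Δ : Set (Finset (Fin n))} (hΔ : DC Δ) (v : Fin n) : DC (delC Δ v) :=
  fun _ ⟨h1, h2⟩ G hG => ⟨hΔ _ h1 G hG, fun h => h2 (hG h)⟩

/-- The star of `v`. -/
def starC (Δ : Set (Finset (Fin n))) (v : Fin n) : Set (Finset (Fin n)) := {G | insert v G ∈ Δ}

lemma dc_starC {Δ : Set (Finset (Fin n))} (hΔ : DC Δ) (v : Fin n) : DC (starC Δ v) :=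
  fun _ h1 _ hG => hΔ _ h1 _ (Finset.insert_subset_insert _ hG)

lemma support_single_add (v : Fin n) (m : Fin n →₀ ℕ) :
    (Finsupp.single v 1 + m).support = insert v m.support := by
  ext j
  by_cases h : v = j <;> simp [h, eq_comm]

lemma X_mul_mem_SR {Γ Γ' : Set (Finset (Fin n))} (hΓ : DC Γ) (hΓ' : DC Γ') {v : Fin n}
    (h : ∀ G, insert v G ∈ Γ ↔ G ∈ Γ') (f : MvPolynomial (Fin n) K) :
    X v * f ∈ SRIdeal n K Γ ↔ f ∈ SRIdeal n K Γ' := by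
  rw [mem_SR hΓ, mem_SR hΓ', support_X_mul]
  simp only [Finset.mem_map, forall_exists_index, and_imp, forall_apply_eq_imp_iff₂,
    addLeftEmbedding_apply, support_single_add, h]

lemma mem_SR_iff_exists {Γ Γ' : Set (Finset (Fin n))} (hΓ : DC Γ) (hΓ' : DC Γ') {v : Fin n}
    (hv : ∀ G, G ∈ Γ' ↔ G ∈ Γ ∧ v ∉ G) (f : MvPolynomial (Fin n) K) :
    f ∈ SRIdeal n K Γ' ↔ ∃ q, f - X v * q ∈ SRIdeal n K Γ := by
  constructor
  · intro hf
    refine ⟨f.divMonomial (Finsupp.single v 1), ?_⟩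
    have h1 : f - X v * f.divMonomial (Finsupp.single v 1) =
        f.modMonomial (Finsupp.single v 1) := by
      rw [sub_eq_iff_eq_add']
      exact (divMonomial_add_modMonomial_single f v).symm
    rw [h1, mem_SR hΓ]
    intro m hm hmΓ
    rw [mem_support_iff] at hm
    by_cases hle : Finsupp.single v 1 ≤ m
    · exact hm (coeff_modMonomial_of_le f hle)
    · rw [coeff_modMonomial_of_not_le f hle] at hm
      refine (mem_SR hΓ').mp hf m (mem_support_iff.mpr hm) ((hv _).mpr ⟨hmΓ, fun h => hle ?_⟩)
      rw [Finsupp.mem_support_iff] at h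
      rw [Finsupp.single_le_iff]
      omega
  · rintro ⟨q, hq⟩
    have h1 : f - X v * q ∈ SRIdeal n K Γ' := SR_anti (fun G hG => ((hv G).mp hG).1) hq
    have h2 : X v * q ∈ SRIdeal n K Γ' := by
      rw [mem_SR hΓ', support_X_mul]
      simp only [Finset.mem_map, forall_exists_index, and_imp, forall_apply_eq_imp_iff₂,
        addLeftEmbedding_apply, support_single_add]
      exact fun m _ h => ((hv _).mp h).2 (Finset.mem_insert_self _ _)
    have := add_mem h1 h2
    rwa [sub_add_cancel] at this

lemma exists_colon_maps {A : Type} [CommRing A] {I I1 I2 : Ideal A} (x : A)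
    (h1 : ∀ f, x * f ∈ I ↔ f ∈ I1) (h2 : ∀ f, f ∈ I2 ↔ ∃ q, f - x * q ∈ I) :
    ∃ (φ : (A ⧸ I1) →ₗ[A] (A ⧸ I)) (ψ : (A ⧸ I) →ₗ[A] (A ⧸ I2)),
      Function.Injective φ ∧ Function.Exact φ ψ ∧ Function.Surjective ψ ∧
      ∀ a, φ (Submodule.Quotient.mk a) = Submodule.Quotient.mk (x * a) := by
  have hI2 : I ≤ I2 := fun f hf => (h2 f).mpr ⟨0, by simpa using hf⟩
  let φ : (A ⧸ I1) →ₗ[A] (A ⧸ I) := Submodule.mapQ I1 I (LinearMap.lsmul A A x)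
    (fun f hf => (h1 f).mpr hf)
  let ψ : (A ⧸ I) →ₗ[A] (A ⧸ I2) := Submodule.mapQ I I2 LinearMap.id hI2
  have hφ : ∀ a, φ (Submodule.Quotient.mk a) = Submodule.Quotient.mk (x * a) := fun a => rfl
  have hψ : ∀ a, ψ (Submodule.Quotient.mk a) = Submodule.Quotient.mk a := fun a => rfl
  refine ⟨φ, ψ, ?_, ?_, ?_, hφ⟩
  · rw [injective_iff_map_eq_zero]
    intro a ha
    obtain ⟨a, rfl⟩ := Submodule.Quotient.mk_surjective _ a
    rw [hφ, Submodule.Quotient.mk_eq_zero] at ha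
    rw [Submodule.Quotient.mk_eq_zero]
    exact (h1 a).mp ha
  · intro b
    obtain ⟨b, rfl⟩ := Submodule.Quotient.mk_surjective _ b
    rw [hψ, Submodule.Quotient.mk_eq_zero, h2]
    constructor
    · rintro ⟨q, hq⟩
      exact ⟨Submodule.Quotient.mk q, ((Submodule.Quotient.eq I).mpr hq).symm⟩
    · rintro ⟨q, hq⟩
      obtain ⟨q, rfl⟩ := Submodule.Quotient.mk_surjective _ q
      exact ⟨q, (Submodule.Quotient.eq I).mp hq.symm⟩
  · intro b
    obtain ⟨b, rfl⟩ := Submodule.Quotient.mk_surjective _ b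
    exact ⟨Submodule.Quotient.mk b, rfl⟩

lemma DGE_of_link_del {Γ : Set (Finset (Fin n))} (hΓ : DC Γ) (v : Fin n) (i : ℕ)
    (hl : DGE (mIdeal n K) i (MvPolynomial (Fin n) K ⧸ SRIdeal n K (linkC Γ v)))
    (hd : DGE (mIdeal n K) (i + 1) (MvPolynomial (Fin n) K ⧸ SRIdeal n K (delC Γ v))) :
    DGE (mIdeal n K) (i + 1) (MvPolynomial (Fin n) K ⧸ SRIdeal n K Γ) := by
  have hstar : DGE (mIdeal n K) (i + 1) (MvPolynomial (Fin n) K ⧸ SRIdeal n K (starC Γ v)) := by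
    obtain ⟨φ, ψ, h1, h2, h3, h4⟩ := exists_colon_maps (X v)
      (X_mul_mem_SR (K := K) (dc_starC hΓ v) (dc_starC hΓ v) (v := v)
        (fun G => by simp [starC]))
      (mem_SR_iff_exists (dc_starC hΓ v) (dc_linkC hΓ v) (v := v) (fun G => by
        constructor
        · rintro ⟨a, b, c⟩; exact ⟨c, b⟩
        · rintro ⟨a, b⟩; exact ⟨hΓ _ a _ (Finset.subset_insert _ _), b, a⟩))
    refine DGE.of_regular (a := X v) (Ideal.subset_span ⟨v, rfl⟩) φ (fun m => ?_) ψ h1 h2 h3 hl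
    obtain ⟨a, rfl⟩ := Submodule.Quotient.mk_surjective _ m
    exact h4 a
  obtain ⟨φ, ψ, h1, h2, h3, h4⟩ := exists_colon_maps (X v)
      (X_mul_mem_SR (K := K) hΓ (dc_starC hΓ v) (v := v) (fun G => Iff.rfl))
      (mem_SR_iff_exists hΓ (dc_delC hΓ v) (v := v) (fun G => Iff.rfl))
  exact DGE.mid φ ψ h1 h2 h3 hstar hd

lemma DGE_up_of_link_del {Δ : Set (Finset (Fin n))} (hΔ : DC Δ) (v : Fin n)
    (hv : IsSheddingVertex Δ v)
    (hl : ∀ i, DGE (mIdeal n K) i (MvPolynomial (Fin n) K ⧸ SRIdeal n K (upC (linkC Δ v) i)))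
    (hd : ∀ i, DGE (mIdeal n K) i (MvPolynomial (Fin n) K ⧸ SRIdeal n K (upC (delC Δ v) i)))
    (i : ℕ) : DGE (mIdeal n K) i (MvPolynomial (Fin n) K ⧸ SRIdeal n K (upC Δ i)) := by
  match i with
  | 0 => intro j hj; omega
  | i + 1 =>
    refine DGE_of_link_del (dc_upC Δ _) v i ?_ ?_
    · rw [linkC_upC hΔ]; exact hl i
    · rw [delC_upC hΔ v hv]; exact hd _

end CombPart
section Filtration

variable {n : ℕ} {K : Type} [Field K]

lemma exists_sub_maps {A : Type} [CommRing A] {M : Type} [AddCommGroup M] [Module A M]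
    {N N' : Submodule A M} (h : N ≤ N') :
    ∃ (φ : (↥N' ⧸ Submodule.comap N'.subtype N) →ₗ[A] (M ⧸ N)) (ψ : (M ⧸ N) →ₗ[A] (M ⧸ N')),
      Function.Injective φ ∧ Function.Exact φ ψ ∧ Function.Surjective ψ := by
  let φ : (↥N' ⧸ Submodule.comap N'.subtype N) →ₗ[A] (M ⧸ N) :=
    Submodule.mapQ _ N N'.subtype le_rfl
  let ψ : (M ⧸ N) →ₗ[A] (M ⧸ N') := Submodule.mapQ N N' LinearMap.id h
  have hφ : ∀ a : N', φ (Submodule.Quotient.mk a) = Submodule.Quotient.mk (a : M) := fun a => rfl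
  have hψ : ∀ a, ψ (Submodule.Quotient.mk a) = Submodule.Quotient.mk a := fun a => rfl
  refine ⟨φ, ψ, ?_, ?_, ?_⟩
  · rw [injective_iff_map_eq_zero]
    intro a ha
    obtain ⟨a, rfl⟩ := Submodule.Quotient.mk_surjective _ a
    rw [hφ, Submodule.Quotient.mk_eq_zero] at ha
    rw [Submodule.Quotient.mk_eq_zero]
    exact ha
  · intro b
    obtain ⟨b, rfl⟩ := Submodule.Quotient.mk_surjective _ b
    rw [hψ, Submodule.Quotient.mk_eq_zero]
    constructor
    · intro hb
      exact ⟨Submodule.Quotient.mk ⟨b, hb⟩, rfl⟩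
    · rintro ⟨q, hq⟩
      obtain ⟨q, rfl⟩ := Submodule.Quotient.mk_surjective _ q
      rw [hφ, Submodule.Quotient.eq] at hq
      have := N'.sub_mem q.2 (h hq)
      simpa using this
  · intro b
    obtain ⟨b, rfl⟩ := Submodule.Quotient.mk_surjective _ b
    exact ⟨Submodule.Quotient.mk b, rfl⟩

lemma DGE_of_CM {M : Type} [AddCommGroup M] [Module (MvPolynomial (Fin n) K) M] {i : ℕ}
    (h : IsCMMod n K M) (hi : (i : WithBot ℕ∞) ≤ mdim (MvPolynomial (Fin n) K) M) :
    DGE (mIdeal n K) i M := by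
  match i with
  | 0 => intro j hj; omega
  | i + 1 =>
    rw [← h] at hi
    have hi' : ((i + 1 : ℕ) : ℕ∞) ≤ depth (mIdeal n K) M := by exact_mod_cast hi
    by_contra hcon
    have : depth (mIdeal n K) M ≤ (i : ℕ∞) := by
      refine sSup_le ?_
      rintro _ ⟨rs, rfl, hJ, hreg⟩
      by_contra hlt
      have hlt' : i + 1 ≤ rs.length := by
        have : ¬ rs.length ≤ i := fun h => hlt (by exact_mod_cast h)
        omega
      exact hcon ((DGE.of_weaklyRegular rs M hJ hreg.toIsWeaklyRegular).mono hlt')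
    have h2 := hi'.trans this
    have h3 : i + 1 ≤ i := by exact_mod_cast h2
    omega

lemma mdim_le_of_killed {Γ : Set (Finset (Fin n))} {d : ℕ} (hd : ∀ F ∈ Γ, F.card ≤ d)
    {M : Type} [AddCommGroup M] [Module (MvPolynomial (Fin n) K) M]
    (hM : ∀ a ∈ SRIdeal n K Γ, ∀ x : M, a • x = 0) :
    mdim (MvPolynomial (Fin n) K) M ≤ (d : WithBot ℕ∞) := by
  have hle : SRIdeal n K Γ ≤ Module.annihilator (MvPolynomial (Fin n) K) M :=
    fun a ha => Module.mem_annihilator.mpr (hM a ha)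
  exact (ringKrullDim_le_of_surjective (Ideal.Quotient.factor hle)
    (Ideal.Quotient.factor_surjective hle)).trans (dim_SR_le hd)

lemma mdim_eq_supportDim {M : Type} [AddCommGroup M] [Module (MvPolynomial (Fin n) K) M]
    [Module.Finite (MvPolynomial (Fin n) K) M] :
    mdim (MvPolynomial (Fin n) K) M = Module.supportDim (MvPolynomial (Fin n) K) M :=
  (Module.supportDim_eq_ringKrullDim_quotient_annihilator (MvPolynomial (Fin n) K) M).symm

lemma DGE_of_seqCM {Δ : Set (Finset (Fin n))} (hΔ : DC Δ)
    (h : IsSeqCMMod n K (MvPolynomial (Fin n) K ⧸ SRIdeal n K Δ)) (i : ℕ) :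
    DGE (mIdeal n K) i (MvPolynomial (Fin n) K ⧸ SRIdeal n K (upC Δ i)) := by
  rcases Nat.eq_zero_or_pos i with hi0 | hi0
  · intro j hj; omega
  obtain ⟨r, f, hf0, hfr, hmono, hCM, hdim⟩ := h
  -- the cut
  obtain ⟨c, hlow, hhigh⟩ : ∃ c : Fin (r + 1),
      (∀ j : Fin r, j.castSucc < c → mdim (MvPolynomial (Fin n) K)
          (↥(f j.succ) ⧸ Submodule.comap (f j.succ).subtype (f j.castSucc)) < (i : WithBot ℕ∞)) ∧
      (∀ j : Fin r, c ≤ j.castSucc → (i : WithBot ℕ∞) ≤ mdim (MvPolynomial (Fin n) K)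
          (↥(f j.succ) ⧸ Submodule.comap (f j.succ).subtype (f j.castSucc))) := by
    by_cases hex : ∃ j : Fin r, (i : WithBot ℕ∞) ≤ mdim (MvPolynomial (Fin n) K)
          (↥(f j.succ) ⧸ Submodule.comap (f j.succ).subtype (f j.castSucc))
    · obtain ⟨j, hj, hmin⟩ := WellFounded.has_min (wellFounded_lt (α := Fin r))
        {j : Fin r | (i : WithBot ℕ∞) ≤ mdim (MvPolynomial (Fin n) K)
          (↥(f j.succ) ⧸ Submodule.comap (f j.succ).subtype (f j.castSucc))} hex
      refine ⟨j.castSucc, fun k hk => ?_, fun k hk => ?_⟩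
      · by_contra hcon
        exact hmin k (not_lt.mp hcon) (by simpa using hk)
      · rcases (show j ≤ k by simpa using hk).eq_or_lt with rfl | hlt
        · exact hj
        · exact le_trans hj (hdim j k hlt).le
    · push Not at hex
      refine ⟨Fin.last r, fun j _ => hex j, fun j hj => ?_⟩
      exact absurd hj (not_le.mpr (Fin.castSucc_lt_last j))
  -- the quotient by the cut has large depth
  have hU : ∀ k : Fin (r + 1), c ≤ k → DGE (mIdeal n K) i
      ((MvPolynomial (Fin n) K ⧸ SRIdeal n K Δ) ⧸ f k) := by
    intro k
    induction k using Fin.reverseInduction with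
    | last =>
      intro _
      refine DGE.of_killed (a := 1) ?_ (fun m => ?_) i
      · exact fun h => (mIdeal_isMaximal (n := n) (K := K)).ne_top
          ((Ideal.eq_top_iff_one _).mpr h)
      · obtain ⟨m, rfl⟩ := Submodule.Quotient.mk_surjective _ m
        rw [one_smul, Submodule.Quotient.mk_eq_zero, hfr]
        trivial
    | cast j ih =>
      intro hc
      obtain ⟨φ, ψ, h1, h2, h3⟩ := exists_sub_maps (hmono (Fin.castSucc_lt_succ (i := j))).le
      exact DGE.mid φ ψ h1 h2 h3 (DGE_of_CM (hCM j) (hhigh j hc))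
        (ih (hc.trans (Fin.castSucc_lt_succ (i := j)).le))
  -- the cut has small dimension
  have hsmall : ∀ F : Finset (Fin n), i ≤ F.card → ∀ k : Fin (r + 1), k ≤ c →
      ∃ a, a ∉ facePrime n K F ∧ ∀ x ∈ f k, a • x = 0 := by
    intro F hF k
    induction k using Fin.induction with
    | zero =>
      intro _
      refine ⟨1, fun h => (facePrime_isPrime F).ne_top ((Ideal.eq_top_iff_one _).mpr h), ?_⟩
      intro x hx
      rw [hf0, Submodule.mem_bot] at hx
      rw [hx, smul_zero]
    | succ j ih =>
      intro hc
      have hlt : j.castSucc < c := lt_of_lt_of_le (Fin.castSucc_lt_succ (i := j)) hc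
      obtain ⟨a, ha, hax⟩ := ih hlt.le
      have hnot : ¬ Module.annihilator (MvPolynomial (Fin n) K)
          (↥(f j.succ) ⧸ Submodule.comap (f j.succ).subtype (f j.castSucc)) ≤
          facePrime n K F := by
        intro hle
        have h1 := ringKrullDim_le_of_surjective (Ideal.Quotient.factor hle)
          (Ideal.Quotient.factor_surjective hle)
        rw [dim_facePrime] at h1
        have h2 := h1.trans_lt (hlow j hlt)
        have h3 : F.card < i := by exact_mod_cast h2
        omega
      obtain ⟨b, hb, hbF⟩ := SetLike.not_le_iff_exists.mp hnot
      refine ⟨a * b, fun h => ((facePrime_isPrime F).mem_or_mem h).elim ha hbF, fun x hx => ?_⟩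
      rw [mul_smul]
      apply hax
      have := Module.mem_annihilator.mp hb (Submodule.Quotient.mk ⟨x, hx⟩)
      rw [← Submodule.Quotient.mk_smul, Submodule.Quotient.mk_eq_zero] at this
      exact this
  -- comparison map
  let π : (MvPolynomial (Fin n) K ⧸ SRIdeal n K Δ) →ₗ[MvPolynomial (Fin n) K]
      (MvPolynomial (Fin n) K ⧸ SRIdeal n K (upC Δ i)) :=
    Submodule.mapQ _ _ LinearMap.id (SR_anti (upC_subset hΔ i))
  have hπ : ∀ p, π (Submodule.Quotient.mk p) = Submodule.Quotient.mk p := fun p => rfl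
  have hker : f c ≤ LinearMap.ker π := by
    intro x hx
    obtain ⟨p, rfl⟩ := Submodule.Quotient.mk_surjective _ x
    rw [LinearMap.mem_ker, hπ, Submodule.Quotient.mk_eq_zero, mem_SR_iff_facePrime (dc_upC Δ i)]
    rintro G ⟨F, hF, hFi, hGF⟩
    obtain ⟨a, ha, hax⟩ := hsmall F hFi c le_rfl
    have h1 := hax _ hx
    rw [← Submodule.Quotient.mk_smul, Submodule.Quotient.mk_eq_zero, smul_eq_mul] at h1
    have h2 := (mem_SR_iff_facePrime hΔ).mp h1 F hF.1
    have h3 := ((facePrime_isPrime F).mem_or_mem h2).resolve_left ha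
    rw [mem_facePrime] at h3 ⊢
    exact fun m hm hs => h3 m hm (hs.trans hGF)
  let ψ := (f c).liftQ π hker
  have hψ : Function.Surjective ψ := by
    intro y
    obtain ⟨p, rfl⟩ := Submodule.Quotient.mk_surjective _ y
    exact ⟨Submodule.Quotient.mk (Submodule.Quotient.mk p), rfl⟩
  have hUc := hU c le_rfl
  -- the kernel is killed by an element outside the irrelevant ideal
  have hkill : ∃ s, s ∉ mIdeal n K ∧ ∀ t : LinearMap.ker ψ, s • t = 0 := by
    by_contra hcon
    push Not at hcon
    have hann : Module.annihilator (MvPolynomial (Fin n) K) (LinearMap.ker ψ) ≤ mIdeal n K := by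
      intro s hs
      by_contra hsm
      obtain ⟨t, ht⟩ := hcon s hsm
      exact ht (Module.mem_annihilator.mp hs t)
    have h1 := DGE.le_supportDim i _ hUc (LinearMap.ker ψ) hann
    rw [← mdim_eq_supportDim] at h1
    have h2 : mdim (MvPolynomial (Fin n) K) (LinearMap.ker ψ) ≤ ((i - 1 : ℕ) : WithBot ℕ∞) := by
      refine mdim_le_of_killed (Γ := loC Δ i) ?_ ?_
      · rintro G ⟨F, _, hF, hGF⟩
        have := Finset.card_le_card hGF
        omega
      · rintro a ha ⟨t, ht⟩
        apply Subtype.ext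
        change a • t = 0
        obtain ⟨t, rfl⟩ := Submodule.Quotient.mk_surjective _ t
        obtain ⟨p, rfl⟩ := Submodule.Quotient.mk_surjective _ t
        have hp : p ∈ SRIdeal n K (upC Δ i) := by
          rw [LinearMap.mem_ker] at ht
          exact (Submodule.Quotient.mk_eq_zero _).mp ht
        have h0 : a • (Submodule.Quotient.mk p : MvPolynomial (Fin n) K ⧸ SRIdeal n K Δ) = 0 := by
          rw [← Submodule.Quotient.mk_smul, Submodule.Quotient.mk_eq_zero]
          exact mul_mem_SR hΔ ha hp
        rw [← Submodule.Quotient.mk_smul, h0, Submodule.Quotient.mk_zero]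
    have h3 := h1.trans h2
    have h4 : i ≤ i - 1 := by exact_mod_cast h3
    omega
  obtain ⟨s, hs, hst⟩ := hkill
  exact DGE.right (LinearMap.ker ψ).subtype ψ (Submodule.subtype_injective _)
    (LinearMap.exact_subtype_ker_map ψ) hψ hUc (DGE.of_killed hs hst _)

lemma seqCM_of_nat {M : Type} [AddCommGroup M] [Module (MvPolynomial (Fin n) K) M]
    (g : ℕ → Submodule (MvPolynomial (Fin n) K) M) (hg : Monotone g) (h0 : g 0 = ⊥)
    (N : ℕ) (hN : g N = ⊤)
    (h : ∀ i, g i ≠ g (i + 1) →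
      IsCMMod n K (↥(g (i + 1)) ⧸ Submodule.comap (g (i + 1)).subtype (g i)) ∧
      mdim (MvPolynomial (Fin n) K)
        (↥(g (i + 1)) ⧸ Submodule.comap (g (i + 1)).subtype (g i)) = (i : WithBot ℕ∞)) :
    IsSeqCMMod n K M := by
  let cm : Submodule (MvPolynomial (Fin n) K) M → Submodule (MvPolynomial (Fin n) K) M → Prop :=
    fun N N' => IsCMMod n K (↥N' ⧸ Submodule.comap N'.subtype N)
  let dm : Submodule (MvPolynomial (Fin n) K) M → Submodule (MvPolynomial (Fin n) K) M →
      WithBot ℕ∞ := fun N N' => mdim (MvPolynomial (Fin n) K) (↥N' ⧸ Submodule.comap N'.subtype N)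
  have key : ∀ k : ℕ, ∃ (r : ℕ) (f : ℕ → Submodule (MvPolynomial (Fin n) K) M),
      f 0 = ⊥ ∧ f r = g k ∧
      (∀ j < r, f j < f (j + 1) ∧ cm (f j) (f (j + 1)) ∧ dm (f j) (f (j + 1)) <
        (k : WithBot ℕ∞)) ∧
      ∀ i j, i < j → j < r → dm (f i) (f (i + 1)) < dm (f j) (f (j + 1)) := by
    intro k
    induction k with
    | zero => exact ⟨0, fun _ => ⊥, rfl, h0.symm, by simp, by simp⟩
    | succ k ih =>
      obtain ⟨r, f, hf0, hfr, hf, hd⟩ := ih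
      have hkk : (k : WithBot ℕ∞) < ((k + 1 : ℕ) : WithBot ℕ∞) := by
        exact_mod_cast Nat.lt_succ_self k
      by_cases heq : g k = g (k + 1)
      · exact ⟨r, f, hf0, hfr.trans heq, fun j hj => ⟨(hf j hj).1, (hf j hj).2.1,
          (hf j hj).2.2.trans hkk⟩, hd⟩
      · have hle : ∀ j, j ≤ r → (fun j => if j ≤ r then f j else g (k + 1)) j = f j :=
          fun j hj => if_pos hj
        have hgt : (fun j => if j ≤ r then f j else g (k + 1)) (r + 1) = g (k + 1) :=
          if_neg (by omega)
        generalize (fun j => if j ≤ r then f j else g (k + 1)) = f' at hle hgt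
        have hlast : dm (f' r) (f' (r + 1)) = (k : WithBot ℕ∞) := by
          rw [hle r le_rfl, hgt, hfr]
          exact (h k heq).2
        refine ⟨r + 1, f', by rw [hle 0 (Nat.zero_le _), hf0], hgt, fun j hj => ?_,
          fun i j hij hj => ?_⟩
        · rcases Nat.lt_succ_iff_lt_or_eq.mp hj with hj | rfl
          · rw [hle j hj.le, hle (j + 1) hj]
            exact ⟨(hf j hj).1, (hf j hj).2.1, (hf j hj).2.2.trans hkk⟩
          · refine ⟨?_, ?_, hlast ▸ hkk⟩
            · rw [hle j le_rfl, hgt, hfr]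
              exact lt_of_le_of_ne (hg (Nat.le_succ k)) heq
            · rw [hle j le_rfl, hgt, hfr]
              exact (h k heq).1
        · rcases Nat.lt_succ_iff_lt_or_eq.mp hj with hj | rfl
          · rw [hle j hj.le, hle (j + 1) hj, hle i (by omega), hle (i + 1) (by omega)]
            exact hd i j hij hj
          · rw [hlast, hle i (by omega), hle (i + 1) (by omega)]
            exact (hf i hij).2.2
  obtain ⟨r, f, hf0, hfr, hf, hd⟩ := key N
  refine ⟨r, fun j => f j, hf0, ?_, ?_, ?_, ?_⟩
  · exact hfr.trans hN
  · exact Fin.strictMono_iff_lt_succ.mpr fun j => (hf j j.2).1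
  · exact fun j => (hf j j.2).2.1
  · exact fun i j hij => hd i j hij j.2

lemma seqCM_of_DGE {Δ : Set (Finset (Fin n))} (hΔ : DC Δ)
    (h : ∀ i, DGE (mIdeal n K) i (MvPolynomial (Fin n) K ⧸ SRIdeal n K (upC Δ i))) :
    IsSeqCMMod n K (MvPolynomial (Fin n) K ⧸ SRIdeal n K Δ) := by
  let π : ∀ i, (MvPolynomial (Fin n) K ⧸ SRIdeal n K Δ) →ₗ[MvPolynomial (Fin n) K]
      (MvPolynomial (Fin n) K ⧸ SRIdeal n K (upC Δ i)) := fun i =>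
    Submodule.mapQ _ _ LinearMap.id (SR_anti (upC_subset hΔ i))
  have hπ : ∀ i p, π i (Submodule.Quotient.mk p) = Submodule.Quotient.mk p := fun i p => rfl
  have hπs : ∀ i, Function.Surjective (π i) := by
    intro i y
    obtain ⟨p, rfl⟩ := Submodule.Quotient.mk_surjective _ y
    exact ⟨Submodule.Quotient.mk p, rfl⟩
  have hmem : ∀ i p, (Submodule.Quotient.mk p : MvPolynomial (Fin n) K ⧸ SRIdeal n K Δ) ∈
      LinearMap.ker (π i) ↔ p ∈ SRIdeal n K (upC Δ i) := by
    intro i p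
    rw [LinearMap.mem_ker, hπ, Submodule.Quotient.mk_eq_zero]
  have hmono : Monotone fun i => LinearMap.ker (π i) := by
    intro i j hij x hx
    obtain ⟨p, rfl⟩ := Submodule.Quotient.mk_surjective _ x
    exact (hmem j p).mpr (SR_anti (upC_anti Δ hij) ((hmem i p).mp hx))
  have hD : ∀ i, DGE (mIdeal n K) i
      ((MvPolynomial (Fin n) K ⧸ SRIdeal n K Δ) ⧸ LinearMap.ker (π i)) := fun i =>
    DGE.of_equiv ((π i).quotKerEquivOfSurjective (hπs i)).symm (h i)
  refine seqCM_of_nat (fun i => LinearMap.ker (π i)) hmono ?_ (n + 1) ?_ ?_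
  · rw [eq_bot_iff]
    intro x hx
    obtain ⟨p, rfl⟩ := Submodule.Quotient.mk_surjective _ x
    rw [hmem, upC_zero hΔ] at hx
    exact (Submodule.Quotient.mk_eq_zero _).mpr hx
  · rw [eq_top_iff]
    intro x _
    obtain ⟨p, rfl⟩ := Submodule.Quotient.mk_surjective _ x
    rw [hmem, upC_top, mem_SR (by intro F hF; exact hF.elim)]
    exact fun m _ hm => hm
  · intro i hne
    have hle : LinearMap.ker (π i) ≤ LinearMap.ker (π (i + 1)) := hmono (Nat.le_succ i)
    set Q := ↥(LinearMap.ker (π (i + 1))) ⧸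
      Submodule.comap (LinearMap.ker (π (i + 1))).subtype (LinearMap.ker (π i)) with hQ
    have hDQ : DGE (mIdeal n K) i Q := by
      obtain ⟨φ, ψ, h1, h2, h3⟩ := exists_sub_maps hle
      exact DGE.left φ ψ h1 h2 h3 (hD i) ((hD (i + 1)).mono (by omega))
    have hdimle : mdim (MvPolynomial (Fin n) K) Q ≤ (i : WithBot ℕ∞) := by
      refine mdim_le_of_killed (Γ := loC Δ (i + 1)) ?_ ?_
      · rintro G ⟨F, _, hF, hGF⟩
        have := Finset.card_le_card hGF
        omega
      · intro a ha q
        obtain ⟨⟨x, hx⟩, rfl⟩ := Submodule.Quotient.mk_surjective _ q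
        obtain ⟨p, rfl⟩ := Submodule.Quotient.mk_surjective _ x
        rw [← Submodule.Quotient.mk_smul, Submodule.Quotient.mk_eq_zero]
        change a • (Submodule.Quotient.mk p : MvPolynomial (Fin n) K ⧸ SRIdeal n K Δ) ∈
          LinearMap.ker (π i)
        have h0 : a • (Submodule.Quotient.mk p : MvPolynomial (Fin n) K ⧸ SRIdeal n K Δ) = 0 := by
          rw [← Submodule.Quotient.mk_smul, Submodule.Quotient.mk_eq_zero]
          exact mul_mem_SR hΔ ha ((hmem _ p).mp hx)
        rw [h0]
        exact zero_mem _
    have hlt : mIdeal n K • (⊤ : Submodule (MvPolynomial (Fin n) K) Q) < ⊤ := by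
      rw [lt_top_iff_ne_top]
      intro htop
      obtain ⟨s, hs, hs0⟩ := Submodule.exists_sub_one_mem_and_smul_eq_zero_of_fg_of_le_smul
        (mIdeal n K) (⊤ : Submodule (MvPolynomial (Fin n) K) Q) (IsNoetherian.noetherian _)
        htop.ge
      have hsm : s ∉ mIdeal n K := by
        intro hsm
        apply (mIdeal_isMaximal (n := n) (K := K)).ne_top
        rw [Ideal.eq_top_iff_one]
        simpa using Ideal.sub_mem _ hsm hs
      apply hne
      apply le_antisymm hle
      intro x hx
      have h1 := hs0 (Submodule.Quotient.mk ⟨x, hx⟩) trivial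
      rw [← Submodule.Quotient.mk_smul, Submodule.Quotient.mk_eq_zero] at h1
      obtain ⟨p, rfl⟩ := Submodule.Quotient.mk_surjective _ x
      change s • (Submodule.Quotient.mk p : MvPolynomial (Fin n) K ⧸ SRIdeal n K Δ) ∈
        LinearMap.ker (π i) at h1
      rw [← Submodule.Quotient.mk_smul, hmem] at h1
      rw [hmem]
      exact SR_of_mul_mem (dc_upC Δ i) hsm h1
    obtain ⟨rs, hlen, hrsJ, hreg⟩ := hDQ.exists_isRegular hlt
    have hdim : mdim (MvPolynomial (Fin n) K) Q = (i : WithBot ℕ∞) := by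
      refine le_antisymm hdimle ?_
      have h1 := length_le_supportDim rs Q hreg
      rw [hlen] at h1
      rw [mdim_eq_supportDim]
      exact h1
    refine ⟨?_, hdim⟩
    change (depth (mIdeal n K) Q : WithBot ℕ∞) = mdim (MvPolynomial (Fin n) K) Q
    rw [hdim]
    have : depth (mIdeal n K) Q = (i : ℕ∞) := by
      refine le_antisymm (sSup_le ?_) (le_sSup ⟨rs, by rw [hlen], hrsJ, hreg⟩)
      rintro _ ⟨rs', rfl, _, hreg'⟩
      have h1 := length_le_supportDim rs' Q hreg'
      rw [← mdim_eq_supportDim, hdim] at h1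
      exact_mod_cast h1
    rw [this]
    rfl

end Filtration

/-- If `Δ` has a shedding vertex `v` such that `link_Δ(v)` and `del_Δ(v)` are both
sequentially Cohen-Macaulay, then `Δ` is sequentially Cohen-Macaulay. -/
theorem statement_4 (n : ℕ) (K : Type) [Field K] (Δ : Set (Finset (Fin n)))
    (hΔ : IsComplex Δ) (hvert : ∀ u : Fin n, {u} ∈ Δ) (v : Fin n)
    (hv : IsSheddingVertex Δ v)
    (hlink : IsSeqCMMod n K (MvPolynomial (Fin n) K ⧸ SRIdeal n K (linkC Δ v)))
    (hdel : IsSeqCMMod n K (MvPolynomial (Fin n) K ⧸ SRIdeal n K (delC Δ v))) :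
    IsSeqCMMod n K (MvPolynomial (Fin n) K ⧸ SRIdeal n K Δ) := by
  have hdc : DC Δ := hΔ.2
  exact seqCM_of_DGE hdc (DGE_up_of_link_del hdc v hv
    (DGE_of_seqCM (dc_linkC hdc v) hlink) (DGE_of_seqCM (dc_delC hdc v) hdel))

end Paper
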